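/- Let L_n be the ladder graph (the Cartesian product of the path P_n with P_2), having 2n vertices. Then the composition counts satisfy C(L_1) = 2, C(L_2) = 12, and C(L_n) = 6·C(L_{n-1}) + C(L_{n-2}) for n > 2. -/

import Mathlib

/-- The number of graph compositions of `G`: partitions of the vertex set into
blocks each of which induces a connected subgraph of `G`. -/
noncomputable def numGraphCompositions {V : Type} [Fintype V] [DecidableEq V] (G : SimpleGraph V) : ℕ :=
  Nat.card {P : Finpartition (Finset.univ : Finset V) //
    ∀ s ∈ P.parts, (G.induce (s : Set V)).Connected}

/-- The `n`-th Bell number: the number of set partitions of an `n`-element set. -/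
noncomputable def bell (n : ℕ) : ℕ :=
  Nat.card (Finpartition (Finset.univ : Finset (Fin n)))

/-- The ladder graph `L_n = P_n □ P_2`. -/
abbrev ladderGraph (n : ℕ) : SimpleGraph (Fin n × Fin 2) :=
  SimpleGraph.pathGraph n □ SimpleGraph.pathGraph 2

/-! A connected partition of `G` is determined by the set of edges lying inside its blocks, and the
edge sets arising this way are the flats of the cycle matroid of `G`. A set of edges of a ladder is
a flat exactly when none of its squares contains precisely three of the edges: under this condition
a colouring of the vertices whose monochromatic edges are the given ones can be built column by
column. The flats of a ladder are therefore counted by the powers of a transfer matrix `T`, indexed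
by whether a rung is chosen, with rows `(4, 3)` and `(3, 2)`. It has trace `6` and determinant `-1`,
so `T ^ 2 = 6 T + 1`, which is the recurrence. -/

section Flats

variable {V α : Type*} {G H : SimpleGraph V} {u v : V}

/-- `H` is a flat of the cycle matroid of `G`, a set of edges being encoded as a spanning
subgraph: an edge of `G` whose endpoints are connected in `H` belongs to `H`. -/
def IsFlat (G H : SimpleGraph V) : Prop :=
  H ≤ G ∧ ∀ ⦃u v⦄, G.Adj u v → H.Reachable u v → H.Adj u v

/-- The spanning subgraph of `G` formed by the edges that are monochromatic for the (not
necessarily proper) vertex colouring `f`. -/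
def monochromaticSubgraph (G : SimpleGraph V) (f : V → α) : SimpleGraph V where
  Adj u v := G.Adj u v ∧ f u = f v
  symm := ⟨fun _ _ h => ⟨h.1.symm, h.2.symm⟩⟩
  loopless := ⟨fun _ h => h.1.ne rfl⟩

theorem eq_of_reachable_monochromaticSubgraph {f : V → α}
    (h : (monochromaticSubgraph G f).Reachable u v) : f u = f v := by
  obtain ⟨w⟩ := h
  induction w with
  | nil => rfl
  | cons hadj _ ih => exact hadj.2.trans ih

theorem isFlat_monochromaticSubgraph (G : SimpleGraph V) (f : V → α) :
    IsFlat G (monochromaticSubgraph G f) :=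
  ⟨fun _ _ h => h.1, fun _ _ hadj hreach => ⟨hadj, eq_of_reachable_monochromaticSubgraph hreach⟩⟩

theorem IsFlat.adj_iff_reachable (hH : IsFlat G H) (huv : G.Adj u v) :
    H.Adj u v ↔ H.Reachable u v :=
  ⟨SimpleGraph.Adj.reachable, hH.2 huv⟩

end Flats

section Compositions

theorem finpartition_eq_of_part_eq {V : Type*} [DecidableEq V] {s : Finset V}
    {P Q : Finpartition s} (h : ∀ a ∈ s, P.part a = Q.part a) : P = Q := by
  refine Finpartition.ext (Finset.ext fun t => ⟨fun ht => ?_, fun ht => ?_⟩)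
  · obtain ⟨a, ha, rfl⟩ := P.part_surjOn ht
    exact h a ha ▸ Q.part_mem.2 ha
  · obtain ⟨a, ha, rfl⟩ := Q.part_surjOn ht
    exact h a ha ▸ P.part_mem.2 ha

variable {V : Type*} [Fintype V] [DecidableEq V] {G H : SimpleGraph V} {u v : V}

/-- The partition `P` of the vertices is a composition of `G`: each block induces a connected
subgraph. -/
def IsComposition (G : SimpleGraph V) (P : Finpartition (Finset.univ : Finset V)) : Prop :=
  ∀ s ∈ P.parts, (G.induce (s : Set V)).Connected

theorem IsComposition.mem_part_iff_reachable {P : Finpartition (Finset.univ : Finset V)}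
    (hP : IsComposition G P) :
    v ∈ P.part u ↔ (monochromaticSubgraph G P.part).Reachable u v := by
  refine ⟨fun hv => ?_, fun h => ?_⟩
  · have hpart : P.part u ∈ P.parts := P.part_mem.2 (Finset.mem_univ u)
    let inclusion : G.induce (P.part u : Set V) →g monochromaticSubgraph G P.part :=
      { toFun := Subtype.val
        map_rel' := fun {a b} hab =>
          ⟨hab, (P.part_eq_of_mem hpart a.2).trans (P.part_eq_of_mem hpart b.2).symm⟩ }
    have hu : u ∈ P.part u := P.mem_part_self.2 (Finset.mem_univ u)
    exact ((hP _ hpart).preconnected ⟨u, hu⟩ ⟨v, hv⟩).map inclusion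
  · rw [eq_of_reachable_monochromaticSubgraph h]
    exact P.mem_part_self.2 (Finset.mem_univ v)

open Classical in
/-- The partition of the vertices into the connected components of `H`. -/
noncomputable def componentPartition (H : SimpleGraph V) :
    Finpartition (Finset.univ : Finset V) :=
  Finpartition.ofSetoid H.reachableSetoid

theorem mem_part_componentPartition : v ∈ (componentPartition H).part u ↔ H.Reachable u v := by
  classical exact Finpartition.mem_part_ofSetoid_iff_rel

theorem part_componentPartition_eq_iff :
    (componentPartition H).part u = (componentPartition H).part v ↔ H.Reachable u v := by
  rw [← Finpartition.mem_part_iff_part_eq_part _ (Finset.mem_univ u) (Finset.mem_univ v),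
    mem_part_componentPartition, SimpleGraph.reachable_comm]

theorem isComposition_componentPartition (h : H ≤ G) :
    IsComposition G (componentPartition H) := by
  intro s hs
  obtain ⟨u, -, rfl⟩ := (componentPartition H).part_surjOn hs
  have hsupp : ((componentPartition H).part u : Set V) = (H.connectedComponentMk u).supp := by
    ext v
    rw [Finset.mem_coe, mem_part_componentPartition, SimpleGraph.reachable_comm,
      SimpleGraph.ConnectedComponent.mem_supp_iff, SimpleGraph.ConnectedComponent.eq]
  rw [hsupp]
  exact (H.connectedComponentMk u).connected_toSimpleGraph.mono fun _ _ hadj => h hadj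

/-- A composition corresponds to the flat of edges inside its blocks, and a flat to the partition
into its components. -/
noncomputable def compositionEquivFlat (G : SimpleGraph V) :
    {P // IsComposition G P} ≃ {H // IsFlat G H} where
  toFun P := ⟨monochromaticSubgraph G P.1.part, isFlat_monochromaticSubgraph G P.1.part⟩
  invFun H := ⟨componentPartition H.1, isComposition_componentPartition H.2.1⟩
  left_inv P := Subtype.ext <| finpartition_eq_of_part_eq fun u _ => Finset.ext fun _ =>
    mem_part_componentPartition.trans P.2.mem_part_iff_reachable.symm
  right_inv H := by
    ext u v
    exact ⟨fun h => H.2.2 h.1 (part_componentPartition_eq_iff.1 h.2),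
      fun h => ⟨H.2.1 h, part_componentPartition_eq_iff.2 h.reachable⟩⟩

theorem numGraphCompositions_eq_card_isFlat {V : Type} [Fintype V] [DecidableEq V]
    (G : SimpleGraph V) : numGraphCompositions G = Nat.card {H // IsFlat G H} :=
  Nat.card_congr (compositionEquivFlat G)

end Compositions

section TransferMatrix

variable {σ ι R : Type*} [Fintype σ] [DecidableEq σ] [CommSemiring R]

theorem sum_prod_cons_eq_pow_mulVec_one (M : Matrix σ σ R) (n : ℕ) (a : σ) :
    ∑ s : Fin n → σ, ∏ i : Fin n,
      M ((Fin.cons a s : Fin (n + 1) → σ) i.castSucc) ((Fin.cons a s : Fin (n + 1) → σ) i.succ) =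
      (M ^ n).mulVec 1 a := by
  induction n generalizing a with
  | zero => simp
  | succ n ih =>
    rw [← (Fin.consEquiv fun _ => σ).sum_comp, Fintype.sum_prod_type, pow_succ',
      ← Matrix.mulVec_mulVec, Matrix.mulVec, dotProduct]
    refine Finset.sum_congr rfl fun b _ => ?_
    rw [← ih b, Finset.mul_sum]
    refine Finset.sum_congr rfl fun s _ => ?_
    rw [Fin.prod_univ_succ]
    rfl

theorem sum_prod_eq_sum_pow (M : Matrix σ σ R) (n : ℕ) :
    ∑ s : Fin (n + 1) → σ, ∏ i : Fin n, M (s i.castSucc) (s i.succ) =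
      ∑ a, ∑ b, (M ^ n) a b := by
  rw [← (Fin.consEquiv fun _ => σ).sum_comp, Fintype.sum_prod_type]
  refine Finset.sum_congr rfl fun a _ => ?_
  exact (sum_prod_cons_eq_pow_mulVec_one M n a).trans (by simp [Matrix.mulVec, dotProduct])

/-- The walks of length `n` in the transition system with states `σ` in which `step a l b` allows
the transition from `a` to `b` labelled `l`, as pairs of a state sequence and a label sequence. -/
def labelledWalks (step : σ → ι → σ → Prop) (n : ℕ) :
    Set ((Fin (n + 1) → σ) × (Fin n → ι)) :=
  {x | ∀ i, step (x.1 i.castSucc) (x.2 i) (x.1 i.succ)}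

variable [Fintype ι]

/-- The matrix counting the labels of the transitions from one state to another. -/
def transferMatrix (step : σ → ι → σ → Prop) [∀ a l b, Decidable (step a l b)] : Matrix σ σ ℕ :=
  Matrix.of fun a b => Fintype.card {l // step a l b}

theorem card_labelledWalks (step : σ → ι → σ → Prop) [∀ a l b, Decidable (step a l b)] (n : ℕ) :
    Nat.card (labelledWalks step n) = ∑ a, ∑ b, (transferMatrix step ^ n) a b := by
  rw [← sum_prod_eq_sum_pow]
  calc Nat.card (labelledWalks step n)
      = Nat.card (Σ s : Fin (n + 1) → σ, ∀ i : Fin n, {l // step (s i.castSucc) l (s i.succ)}) :=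
        Nat.card_congr <|
          (Equiv.subtypeProdEquivSigmaSubtype fun (s : Fin (n + 1) → σ) (l : Fin n → ι) =>
            ∀ i : Fin n, step (s i.castSucc) (l i) (s i.succ)).trans <|
          Equiv.sigmaCongrRight fun s => Equiv.subtypePiEquivPi
            (p := fun (i : Fin n) (l : ι) => step (s i.castSucc) l (s i.succ))
    _ = ∑ s : Fin (n + 1) → σ, ∏ i : Fin n, transferMatrix step (s i.castSucc) (s i.succ) := by
        simp only [Nat.card_eq_fintype_card, Fintype.card_sigma, Fintype.card_pi, transferMatrix,
          Matrix.of_apply]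

end TransferMatrix

section Ladder

variable {n : ℕ}

theorem ladderGraph_adj_rung (i : Fin n) : (ladderGraph n).Adj (i, 0) (i, 1) := by
  simp [SimpleGraph.pathGraph_adj]

theorem ladderGraph_adj_rail (i : Fin n) (j : Fin 2) :
    (ladderGraph (n + 1)).Adj (i.castSucc, j) (i.succ, j) := by
  simp [SimpleGraph.pathGraph_adj]

theorem le_of_le_ladderGraph {H K : SimpleGraph (Fin (n + 1) × Fin 2)}
    (hH : H ≤ ladderGraph (n + 1))
    (rung : ∀ i, H.Adj (i, 0) (i, 1) → K.Adj (i, 0) (i, 1))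
    (rail : ∀ (i : Fin n) (j : Fin 2),
      H.Adj (i.castSucc, j) (i.succ, j) → K.Adj (i.castSucc, j) (i.succ, j)) : H ≤ K := by
  have rail' : ∀ (a b : Fin (n + 1)) (j : Fin 2), a.val + 1 = b.val →
      H.Adj (a, j) (b, j) → K.Adj (a, j) (b, j) := by
    intro a b j hab
    obtain ⟨i, rfl⟩ : ∃ i : Fin n, i.castSucc = a := ⟨⟨a, by omega⟩, rfl⟩
    obtain rfl : i.succ = b := Fin.ext hab
    exact rail i j
  rintro ⟨a, j⟩ ⟨b, k⟩ hadj
  have hL := hH hadj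
  simp only [SimpleGraph.boxProd_adj, SimpleGraph.pathGraph_adj] at hL
  rcases hL with ⟨hab | hba, rfl⟩ | ⟨-, rfl⟩
  · exact rail' a b j hab hadj
  · exact (rail' b a j hba hadj.symm).symm
  · fin_cases j <;> fin_cases k
    · exact absurd hadj H.irrefl
    · exact rung a hadj
    · exact (rung a hadj.symm).symm
    · exact absurd hadj H.irrefl

/-- A set of edges of a 4-cycle, given by its two rungs `r`, `r'` and its two rails `l`, is a flat
of the 4-cycle: it does not consist of exactly three edges. -/
def IsFlatSquare (r : Bool) (l : Fin 2 → Bool) (r' : Bool) : Prop :=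
  r.toNat + (l 0).toNat + (l 1).toNat + r'.toNat ≠ 3

instance (r : Bool) (l : Fin 2 → Bool) (r' : Bool) : Decidable (IsFlatSquare r l r') :=
  inferInstanceAs (Decidable (_ ≠ _))

theorem isFlatSquare_decide_eq {α : Type*} [DecidableEq α] (p q : Fin 2 → α) :
    IsFlatSquare (p 0 = p 1) (fun j => p j = q j) (q 0 = q 1) := by
  unfold IsFlatSquare
  by_cases h₁ : p 0 = p 1 <;> by_cases h₂ : p 0 = q 0 <;> by_cases h₃ : p 1 = q 1 <;>
    by_cases h₄ : q 0 = q 1 <;> simp_all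

open Classical in
/-- The edges of a subgraph of the ladder, as the sequence of its rungs and the sequence of its
pairs of rails. -/
noncomputable def rungsRails (H : SimpleGraph (Fin (n + 1) × Fin 2)) :
    (Fin (n + 1) → Bool) × (Fin n → Fin 2 → Bool) :=
  (fun i => H.Adj (i, 0) (i, 1), fun i j => H.Adj (i.castSucc, j) (i.succ, j))

theorem mapsTo_rungsRails :
    Set.MapsTo rungsRails {H | IsFlat (ladderGraph (n + 1)) H} (labelledWalks IsFlatSquare n) := by
  classical
  intro H hH i
  simp only [rungsRails, hH.adj_iff_reachable (ladderGraph_adj_rung _),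
    hH.adj_iff_reachable (ladderGraph_adj_rail _ _), ← SimpleGraph.ConnectedComponent.eq]
  exact isFlatSquare_decide_eq (fun j => H.connectedComponentMk (i.castSucc, j))
    (fun j => H.connectedComponentMk (i.succ, j))

theorem injOn_rungsRails :
    Set.InjOn rungsRails {H | IsFlat (ladderGraph (n + 1)) H} := by
  intro H hH K hK h
  simp only [rungsRails, Prod.mk.injEq, funext_iff, decide_eq_decide] at h
  exact le_antisymm
    (le_of_le_ladderGraph hH.1 (fun i => (h.1 i).1) (fun i j => (h.2 i j).1))
    (le_of_le_ladderGraph hK.1 (fun i => (h.1 i).2) (fun i j => (h.2 i j).2))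

-- Only adjacent columns are compared, so colours may be reused: three suffice, and the extension by
-- one column is a finite check.
theorem exists_column_coloring {r r' : Bool} {l : Fin 2 → Bool} (h : IsFlatSquare r l r')
    (p : Fin 2 → Fin 3) (hp : decide (p 0 = p 1) = r) :
    ∃ q : Fin 2 → Fin 3, decide (q 0 = q 1) = r' ∧ ∀ j, decide (p j = q j) = l j := by
  revert r r' l p
  decide

theorem exists_ladder_coloring {s : Fin (n + 1) → Bool} {l : Fin n → Fin 2 → Bool}
    (h : (s, l) ∈ labelledWalks IsFlatSquare n) :
    ∃ c : Fin (n + 1) → Fin 2 → Fin 3, (∀ i, decide (c i 0 = c i 1) = s i) ∧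
      ∀ i j, decide (c i.castSucc j = c i.succ j) = l i j := by
  let Column (i : Fin (n + 1)) := {p : Fin 2 → Fin 3 // decide (p 0 = p 1) = s i}
  let first : Column 0 := ⟨![0, if s 0 then 0 else 1], by cases s 0 <;> rfl⟩
  have step (i : Fin n) (p : Column i.castSucc) :
      ∃ q : Column i.succ, ∀ j, decide (p.1 j = q.1 j) = l i j := by
    obtain ⟨q, hq, hpq⟩ := exists_column_coloring (h i) p.1 p.2
    exact ⟨⟨q, hq⟩, hpq⟩
  choose next hnext using step
  let c : ∀ i, Column i := Fin.induction first next
  exact ⟨fun i => (c i).1, fun i => (c i).2, fun i => hnext i (c i.castSucc)⟩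

theorem surjOn_rungsRails :
    Set.SurjOn rungsRails {H | IsFlat (ladderGraph (n + 1)) H} (labelledWalks IsFlatSquare n) := by
  rintro ⟨s, l⟩ h
  obtain ⟨c, hrung, hrail⟩ := exists_ladder_coloring h
  refine ⟨_, isFlat_monochromaticSubgraph _ fun x => c x.1 x.2, ?_⟩
  simp only [rungsRails, monochromaticSubgraph, ladderGraph_adj_rung, ladderGraph_adj_rail,
    true_and, Prod.mk.injEq, funext_iff]
  exact ⟨fun i => by simpa using hrung i, fun i j => by simpa using hrail i j⟩

theorem numGraphCompositions_ladderGraph_succ (n : ℕ) :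
    numGraphCompositions (ladderGraph (n + 1)) =
      ∑ a, ∑ b, (transferMatrix IsFlatSquare ^ n) a b := by
  rw [numGraphCompositions_eq_card_isFlat, ← card_labelledWalks]
  exact Nat.card_congr
    (Set.BijOn.equiv rungsRails ⟨mapsTo_rungsRails, injOn_rungsRails, surjOn_rungsRails⟩)

theorem transferMatrix_isFlatSquare_sq :
    transferMatrix IsFlatSquare ^ 2 = 6 • transferMatrix IsFlatSquare + 1 := by
  decide

end Ladder

/-- `C(L_1) = 2`, `C(L_2) = 12`, and `C(L_n) = 6·C(L_{n-1}) + C(L_{n-2})` for `n > 2`. -/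
theorem numGraphCompositions_ladder :
    numGraphCompositions (ladderGraph 1) = 2 ∧
    numGraphCompositions (ladderGraph 2) = 12 ∧
    (∀ n : ℕ, 2 < n →
      numGraphCompositions (ladderGraph n) =
        6 * numGraphCompositions (ladderGraph (n - 1)) +
          numGraphCompositions (ladderGraph (n - 2))) := by
  refine ⟨?_, ?_, fun n hn => ?_⟩
  · rw [numGraphCompositions_ladderGraph_succ 0]
    decide
  · rw [numGraphCompositions_ladderGraph_succ 1]
    decide
  · obtain ⟨m, rfl⟩ : ∃ m, n = m + 3 := ⟨n - 3, by omega⟩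
    have hpow : transferMatrix IsFlatSquare ^ (m + 2) =
        6 • transferMatrix IsFlatSquare ^ (m + 1) + transferMatrix IsFlatSquare ^ m := by
      rw [pow_add, transferMatrix_isFlatSquare_sq, mul_add, mul_one, mul_smul_comm, ← pow_succ]
    change numGraphCompositions (ladderGraph (m + 2 + 1)) =
      6 * numGraphCompositions (ladderGraph (m + 1 + 1)) +
        numGraphCompositions (ladderGraph (m + 1))
    simp only [numGraphCompositions_ladderGraph_succ, hpow, Matrix.add_apply, Matrix.smul_apply,
      smul_eq_mul, Finset.sum_add_distrib, Finset.mul_sum]
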